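/- Let G and H be sofic groups. Then the free product G ∗ H is sofic. -/

import Mathlib

/-- Two self-maps of a finite set `A` are `ε`-similar if the number of points where they
differ is at most `ε·|A|`. They are `(1-ε)`-different if they are not `(1-ε)`-similar. -/
def EpsSimilar {A : Type*} [Fintype A] (ε : ℝ) (e f : A → A) : Prop :=
  (Nat.card {a : A // e a ≠ f a} : ℝ) ≤ ε * Fintype.card A

/-- An `(F, ε)`-quasi-action of a group `G` on a finite set `A`:
(a) `φ(ef)` is `ε`-similar to `φ(e)` followed by `φ(f)` for `e, f ∈ F`;
(b) `φ(1)` is `ε`-similar to the identity;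
(c) for `1 ≠ e ∈ F`, `φ(e)` is `(1-ε)`-different from the identity. -/
def IsQuasiAction {G : Type*} [Group G] (F : Finset G) (ε : ℝ)
    {A : Type*} [Fintype A] (φ : G → A → A) : Prop :=
  (∀ e ∈ F, ∀ f ∈ F, EpsSimilar ε (φ (e * f)) (fun a => φ f (φ e a))) ∧
  EpsSimilar ε (φ 1) id ∧
  (∀ e ∈ F, e ≠ 1 → ¬ EpsSimilar (1 - ε) (φ e) id)

/-- A group `G` is sofic if for every finite subset `F ⊆ G` and every `ε ∈ (0,1)` there is an
`(F, ε)`-quasi-action of `G` on some finite nonempty set. -/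
def IsSofic (G : Type*) [Group G] : Prop :=
  ∀ (F : Finset G) (ε : ℝ), 0 < ε → ε < 1 →
    ∃ (A : Type) (_ : Fintype A) (_ : Nonempty A) (φ : G → A → A),
      IsQuasiAction F ε φ

/-!
The direct product of two sofic groups is sofic, and so is the free product of a sofic group `P`
with `ℤ`, written as the semidirect product of the free group with basis `P` by `P`: a quasi-action
of `P` on `A` lifts to a skew product over `A` with fibre a finite quotient of the free group with
basis `A`, because free groups are residually finite. For `P = G × H` and `t` the generator of `ℤ`,
the subgroup generated by `G` and `t⁻¹ H t` is the free product `G ∗ H`, and soficity passes to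
subgroups.
-/

section Density

variable {A B : Type*} [Fintype A] [Fintype B] {p q : A → Prop}

open scoped Classical in
/-- The proportion of the points of a finite type at which a predicate holds. It is a real number,
so that it can be compared with the tolerances of quasi-actions, and is `0` on an empty type. -/
noncomputable def density (p : A → Prop) : ℝ := ({a | p a} : Finset A).dens

theorem density_eq_natCard_div (p : A → Prop) :
    density p = (Nat.card {a // p a} : ℝ) / Fintype.card A := by
  classical
  rw [density, Finset.nnratCast_dens, Nat.card_eq_fintype_card, Fintype.card_subtype]

theorem density_eq_dens (p : A → Prop) [DecidablePred p] :
    density p = ({a | p a} : Finset A).dens := by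
  unfold density
  congr!

theorem density_nonneg (p : A → Prop) : 0 ≤ density p := by
  unfold density
  positivity

theorem density_mono (h : ∀ a, p a → q a) : density p ≤ density q := by
  unfold density
  gcongr
  exact h _

theorem density_false : density (fun _ : A => False) = 0 := by
  simp [density]

theorem density_or_le (p q : A → Prop) : density (fun a => p a ∨ q a) ≤ density p + density q := by
  classical
  rw [density_eq_dens, density_eq_dens, density_eq_dens, Finset.filter_or]
  exact_mod_cast Finset.dens_union_le _ _

theorem density_not [Nonempty A] (p : A → Prop) : density (fun a => ¬ p a) = 1 - density p := by
  classical
  have h := Finset.dens_filter_add_dens_filter_not_eq_dens (s := (Finset.univ : Finset A)) p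
  rw [Finset.dens_univ] at h
  rw [eq_sub_iff_add_eq', density_eq_dens, density_eq_dens]
  exact_mod_cast h

theorem density_exists_mem_le {ι : Type*} {s : Finset ι} {p : ι → A → Prop} {δ : ℝ}
    (h : ∀ i ∈ s, density (p i) ≤ δ) : density (fun a => ∃ i ∈ s, p i a) ≤ s.card * δ := by
  classical
  induction s using Finset.induction_on with
  | empty => simp [density_false]
  | insert i s hi ih =>
    simp only [Finset.exists_mem_insert, Finset.card_insert_of_notMem hi]
    have hs := ih fun j hj => h j (Finset.mem_insert_of_mem hj)
    have hor := density_or_le (p i) fun a => ∃ j ∈ s, p j a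
    have hp := h i (Finset.mem_insert_self i s)
    push_cast
    linarith

theorem density_comp_fst_le (p : A → Prop) : density (fun x : A × B => p x.1) ≤ density p := by
  classical
  have hset : ({x | p x.1} : Finset (A × B)) = ({a | p a} : Finset A) ×ˢ Finset.univ := by
    ext; simp
  rw [density, density, hset, Finset.nnratCast_dens, Finset.nnratCast_dens, Finset.card_product,
    Finset.card_univ, Fintype.card_prod, Nat.cast_mul, Nat.cast_mul]
  exact mul_div_mul_right_le (by positivity)

theorem density_comp_snd_le (p : B → Prop) : density (fun x : A × B => p x.2) ≤ density p := by
  classical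
  have hset : ({x | p x.2} : Finset (A × B)) = Finset.univ ×ˢ ({b | p b} : Finset B) := by
    ext; simp
  rw [density, density, hset, Finset.nnratCast_dens, Finset.nnratCast_dens, Finset.card_product,
    Finset.card_univ, Fintype.card_prod, Nat.cast_mul, Nat.cast_mul]
  exact mul_div_mul_left_le (by positivity)

theorem epsSimilar_iff_density_le [Nonempty A] {ε : ℝ} {e f : A → A} :
    EpsSimilar ε e f ↔ density (fun a => e a ≠ f a) ≤ ε := by
  rw [EpsSimilar, density_eq_natCard_div, div_le_iff₀ (by exact_mod_cast Fintype.card_pos)]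

theorem not_epsSimilar_one_sub_iff_density_lt [Nonempty A] {ε : ℝ} {e f : A → A} :
    ¬ EpsSimilar (1 - ε) e f ↔ density (fun a => e a = f a) < ε := by
  rw [epsSimilar_iff_density_le, density_not, not_le, sub_lt_sub_iff_left]

end Density

section FreePoint

variable {G H : Type*} [Group G] [Group H] {A : Type*}

/-- The map `φ` behaves at the point `a`, as far as the elements of `F` can tell, like a free action
of `G`; as in `IsQuasiAction`, the action is on the right. Soficity asks for almost all points to
be of this kind, see `isSofic_iff_exists_density_lt`. -/
structure IsFreeAt (F : Finset G) (φ : G → A → A) (a : A) : Prop where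
  map_mul : ∀ e ∈ F, ∀ f ∈ F, φ (e * f) a = φ f (φ e a)
  map_one : φ 1 a = a
  map_ne : ∀ e ∈ F, e ≠ 1 → φ e a ≠ a

theorem IsQuasiAction.density_not_isFreeAt_le [Fintype A] [Nonempty A] {F : Finset G} {δ : ℝ}
    {φ : G → A → A} (h : IsQuasiAction F δ φ) :
    density (fun a => ¬ IsFreeAt F φ a) ≤ (F.card * F.card + 1 + F.card) * δ := by
  classical
  obtain ⟨hmul, hone, hne⟩ := h
  let notMul (a : A) : Prop := ∃ x ∈ F ×ˢ F, φ (x.1 * x.2) a ≠ φ x.2 (φ x.1 a)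
  let notOne (a : A) : Prop := φ 1 a ≠ a
  let fixed (a : A) : Prop := ∃ e ∈ F.erase 1, φ e a = a
  have hnotMul : density notMul ≤ (F ×ˢ F).card * δ := density_exists_mem_le fun x hx =>
    epsSimilar_iff_density_le.1 (hmul _ (Finset.mem_product.1 hx).1 _ (Finset.mem_product.1 hx).2)
  have hnotOne : density notOne ≤ δ := epsSimilar_iff_density_le.1 hone
  have hfixed : density fixed ≤ (F.erase 1).card * δ := density_exists_mem_le fun e he =>
    (not_epsSimilar_one_sub_iff_density_lt.1
      (hne e (Finset.mem_of_mem_erase he) (Finset.ne_of_mem_erase he))).le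
  have hδ : 0 ≤ δ := (density_nonneg _).trans hnotOne
  have hbad (a : A) (ha : ¬ IsFreeAt F φ a) : (notMul a ∨ notOne a) ∨ fixed a := by
    contrapose! ha
    simp only [notMul, notOne, fixed, not_exists, not_and, not_not] at ha
    exact ⟨fun e he f hf => ha.1.1 (e, f) (Finset.mk_mem_product he hf), ha.1.2,
      fun e he hne => ha.2 e (Finset.mem_erase.2 ⟨hne, he⟩)⟩
  calc density (fun a => ¬ IsFreeAt F φ a)
      ≤ density (fun a => (notMul a ∨ notOne a) ∨ fixed a) := density_mono hbad
    _ ≤ density notMul + density notOne + density fixed :=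
        (density_or_le _ _).trans (add_le_add_left (density_or_le _ _) _)
    _ ≤ (F ×ˢ F).card * δ + δ + (F.erase 1).card * δ := by gcongr
    _ ≤ (F.card * F.card) * δ + δ + F.card * δ := by
        rw [Finset.card_product, Nat.cast_mul]
        gcongr
        exact F.erase_subset 1
    _ = (F.card * F.card + 1 + F.card) * δ := by ring

theorem isQuasiAction_of_density_not_isFreeAt_lt [Fintype A] [Nonempty A] {F : Finset G} {ε : ℝ}
    {φ : G → A → A} (h : density (fun a => ¬ IsFreeAt F φ a) < ε) : IsQuasiAction F ε φ := by
  refine ⟨fun e he f hf => ?_, ?_, fun e he hne => ?_⟩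
  · exact epsSimilar_iff_density_le.2 <|
      (density_mono fun a ha hfree => ha (hfree.map_mul e he f hf)).trans h.le
  · exact epsSimilar_iff_density_le.2 <|
      (density_mono fun a ha hfree => ha hfree.map_one).trans h.le
  · exact not_epsSimilar_one_sub_iff_density_lt.2 <|
      (density_mono fun a ha hfree => hfree.map_ne e he hne ha).trans_lt h

theorem isSofic_iff_exists_density_lt :
    IsSofic G ↔ ∀ (F : Finset G) (ε : ℝ), 0 < ε →
      ∃ (A : Type) (_ : Fintype A) (_ : Nonempty A) (φ : G → A → A),
        density (fun a => ¬ IsFreeAt F φ a) < ε := by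
  refine ⟨fun h F ε hε => ?_, fun h F ε hε _ => ?_⟩
  · have hN : (0 : ℝ) < F.card * F.card + 1 + F.card := by positivity
    obtain ⟨δ, hδ₀, hδ⟩ := exists_between (lt_min one_pos (div_pos hε hN))
    obtain ⟨hδ₁, hδε⟩ := lt_min_iff.1 hδ
    obtain ⟨A, hfin, hne, φ, hφ⟩ := h F δ hδ₀ hδ₁
    exact ⟨A, hfin, hne, φ, hφ.density_not_isFreeAt_le.trans_lt ((lt_div_iff₀' hN).1 hδε)⟩
  · obtain ⟨A, hfin, hne, φ, hφ⟩ := h F ε hε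
    exact ⟨A, hfin, hne, φ, isQuasiAction_of_density_not_isFreeAt_lt hφ⟩

theorem IsFreeAt.comp_of_injective [DecidableEq H] {F : Finset G} {f : G →* H}
    (hf : Function.Injective f) {φ : H → A → A} {a : A} (h : IsFreeAt (F.image f) φ a) :
    IsFreeAt F (fun g => φ (f g)) a where
  map_mul e he e' he' := by
    rw [_root_.map_mul]
    exact h.map_mul _ (Finset.mem_image_of_mem f he) _ (Finset.mem_image_of_mem f he')
  map_one := by rw [_root_.map_one, h.map_one]
  map_ne e he hne :=
    h.map_ne _ (Finset.mem_image_of_mem f he) ((map_ne_one_iff f hf).2 hne)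

theorem IsFreeAt.prodMap [DecidableEq G] [DecidableEq H] {B : Type*} {F : Finset (G × H)}
    {φ : G → A → A} {ψ : H → B → B} {x : A × B} (hφ : IsFreeAt (F.image Prod.fst) φ x.1)
    (hψ : IsFreeAt (F.image Prod.snd) ψ x.2) :
    IsFreeAt F (fun g => Prod.map (φ g.1) (ψ g.2)) x where
  map_mul e he f hf := Prod.ext
    (hφ.map_mul _ (Finset.mem_image_of_mem _ he) _ (Finset.mem_image_of_mem _ hf))
    (hψ.map_mul _ (Finset.mem_image_of_mem _ he) _ (Finset.mem_image_of_mem _ hf))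
  map_one := Prod.ext hφ.map_one hψ.map_one
  map_ne e he hne hfix := by
    have hfst : e.1 = 1 := of_not_not fun h =>
      hφ.map_ne _ (Finset.mem_image_of_mem _ he) h (congrArg Prod.fst hfix)
    have hsnd : e.2 = 1 := of_not_not fun h =>
      hψ.map_ne _ (Finset.mem_image_of_mem _ he) h (congrArg Prod.snd hfix)
    exact hne (Prod.ext hfst hsnd)

open scoped Pointwise in
theorem IsFreeAt.injOn [DecidableEq G] {S : Finset G} (hone : 1 ∈ S) {φ : G → A → A} {a : A}
    (h : IsFreeAt (S / S) φ a) : Set.InjOn (fun x => φ x a) S := by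
  have hmem {x : G} (hx : x ∈ S) : x ∈ S / S := by simpa using Finset.div_mem_div hx hone
  have hinv {x : G} (hx : x ∈ S) : x⁻¹ ∈ S / S := by simpa using Finset.div_mem_div hone hx
  intro x hx y hy (hxy : φ x a = φ y a)
  refine of_not_not fun hne => h.map_ne (x / y) (Finset.div_mem_div hx hy) (div_ne_one.2 hne) ?_
  calc φ (x / y) a
      = φ y⁻¹ (φ x a) := by rw [div_eq_mul_inv, h.map_mul x (hmem hx) y⁻¹ (hinv hy)]
    _ = φ (y * y⁻¹) a := by rw [hxy, h.map_mul y (hmem hy) y⁻¹ (hinv hy)]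
    _ = a := by rw [mul_inv_cancel, h.map_one]

theorem IsSofic.of_injective {f : G →* H} (hf : Function.Injective f) (h : IsSofic H) :
    IsSofic G := by
  classical
  rw [isSofic_iff_exists_density_lt] at h ⊢
  intro F ε hε
  obtain ⟨A, hfin, hne, φ, hφ⟩ := h (F.image f) ε hε
  exact ⟨A, hfin, hne, fun g => φ (f g),
    (density_mono fun a => mt (IsFreeAt.comp_of_injective hf)).trans_lt hφ⟩

theorem IsSofic.prod (hG : IsSofic G) (hH : IsSofic H) : IsSofic (G × H) := by
  classical
  rw [isSofic_iff_exists_density_lt] at hG hH ⊢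
  intro F ε hε
  obtain ⟨A, _, _, φ, hφ⟩ := hG (F.image Prod.fst) (ε / 2) (half_pos hε)
  obtain ⟨B, _, _, ψ, hψ⟩ := hH (F.image Prod.snd) (ε / 2) (half_pos hε)
  refine ⟨A × B, inferInstance, inferInstance, fun g => Prod.map (φ g.1) (ψ g.2), ?_⟩
  calc density (fun x => ¬ IsFreeAt F (fun g => Prod.map (φ g.1) (ψ g.2)) x)
      ≤ density (fun x : A × B => ¬ IsFreeAt (F.image Prod.fst) φ x.1 ∨
          ¬ IsFreeAt (F.image Prod.snd) ψ x.2) :=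
        density_mono fun x hx => not_and_or.1 fun h => hx (h.1.prodMap h.2)
    _ ≤ density (fun a => ¬ IsFreeAt (F.image Prod.fst) φ a) +
          density (fun b => ¬ IsFreeAt (F.image Prod.snd) ψ b) :=
        (density_or_le _ _).trans (add_le_add
          (density_comp_fst_le fun a => ¬ IsFreeAt (F.image Prod.fst) φ a)
          (density_comp_snd_le fun b => ¬ IsFreeAt (F.image Prod.snd) ψ b))
    _ < ε := by linarith

end FreePoint

section FreeGroup

variable {α β : Type*}

theorem eqOn_freeGroup_map_closure {f g : α → β} {S : Set α} (h : Set.EqOn f g S) :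
    Set.EqOn (FreeGroup.map f) (FreeGroup.map g) (Subgroup.closure (FreeGroup.of '' S)) :=
  MonoidHom.eqOn_closure (by rintro _ ⟨x, hx, rfl⟩; simp [h hx])

theorem injOn_freeGroup_map_closure {f : α → β} {S : Set α} (h : Set.InjOn f S) :
    Set.InjOn (FreeGroup.map f) (Subgroup.closure (FreeGroup.of '' S)) := by
  cases isEmpty_or_nonempty α with
  | inl _ => exact Set.injOn_of_subsingleton _ _
  | inr _ =>
    have hinv : Set.EqOn (Function.invFunOn f S ∘ f) id S := h.leftInvOn_invFunOn
    refine Set.LeftInvOn.injOn (f₁' := FreeGroup.map (Function.invFunOn f S)) fun w hw => ?_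
    rw [FreeGroup.map.comp, eqOn_freeGroup_map_closure hinv hw, FreeGroup.map.id]

theorem exists_finset_mem_closure_freeGroup_of (w : FreeGroup α) :
    ∃ S : Finset α, w ∈ Subgroup.closure (FreeGroup.of '' (S : Set α)) := by
  classical
  induction w with
  | C1 => exact ⟨∅, one_mem _⟩
  | of x => exact ⟨{x}, Subgroup.subset_closure (by simp)⟩
  | inv_of x h => exact h.imp fun _ => inv_mem
  | mul v w hv hw =>
    obtain ⟨S, hS⟩ := hv
    obtain ⟨T, hT⟩ := hw
    refine ⟨S ∪ T, mul_mem ?_ ?_⟩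
    · exact Subgroup.closure_mono (Set.image_mono (by simp)) hS
    · exact Subgroup.closure_mono (Set.image_mono (by simp)) hT

theorem exists_perm_extending_mul_left {Γ : Type*} [Group Γ] (V : Finset Γ) (x : Γ) :
    ∃ σ : Equiv.Perm V, ∀ v : V, x * v ∈ V → (σ v : Γ) = x * v := by
  classical
  let e : {v : V // x * v ∈ V} ≃ {v : V // x⁻¹ * v ∈ V} :=
    { toFun := fun v => ⟨⟨x * v.1, v.2⟩, by simp⟩
      invFun := fun v => ⟨⟨x⁻¹ * v.1, v.2⟩, by simp⟩
      left_inv := fun v => by simp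
      right_inv := fun v => by simp }
  exact ⟨e.extendSubtype, fun v hv => by rw [e.extendSubtype_apply_of_mem v hv]; rfl⟩

theorem freeGroup_lift_mk_apply_one {V : Finset (FreeGroup α)} {σ : α → Equiv.Perm V}
    (hσ : ∀ (x : α) (v : V), FreeGroup.of x * v ∈ V → (σ x v : FreeGroup α) = FreeGroup.of x * v)
    (hone : 1 ∈ V) (L : List (α × Bool)) (hL : ∀ l, l <:+ L → FreeGroup.mk l ∈ V) :
    (FreeGroup.lift σ (FreeGroup.mk L) ⟨1, hone⟩ : FreeGroup α) = FreeGroup.mk L := by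
  have hσ_inv (x : α) (v : V) (hv : (FreeGroup.of x)⁻¹ * v ∈ V) :
      ((σ x)⁻¹ v : FreeGroup α) = (FreeGroup.of x)⁻¹ * v := by
    have hσv : σ x ⟨_, hv⟩ = v := Subtype.ext (by rw [hσ] <;> simp)
    rw [Equiv.Perm.inv_eq_iff_eq.2 hσv.symm]
  induction L with
  | nil => rfl
  | cons p L ih =>
    have hcons : FreeGroup.mk (p :: L) ∈ V := hL _ (List.suffix_refl _)
    specialize ih fun l hl => hL l (hl.trans (List.suffix_cons _ _))
    rw [← List.singleton_append, ← FreeGroup.mul_mk] at hcons ⊢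
    rw [map_mul, Equiv.Perm.mul_apply]
    rw [← ih] at hcons
    obtain ⟨x, b⟩ := p
    cases b with
    | true =>
      have hgen : FreeGroup.mk [(x, true)] = FreeGroup.of x := rfl
      rw [hgen] at hcons ⊢
      rw [FreeGroup.lift_apply_of, hσ x _ hcons, ih]
    | false =>
      have hgen : FreeGroup.mk [(x, false)] = (FreeGroup.of x)⁻¹ := rfl
      rw [hgen] at hcons ⊢
      rw [map_inv, FreeGroup.lift_apply_of, hσ_inv x _ hcons, ih]

instance freeGroup_residuallyFinite : Group.ResiduallyFinite (FreeGroup α) := by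
  classical
  refine Group.residuallyFinite_of_forall_exists_finite_monoidHom fun w hw => ?_
  let V : Finset (FreeGroup α) := (w.toWord.tails.map FreeGroup.mk).toFinset
  have hsuffix (l : List (α × Bool)) (hl : l <:+ w.toWord) : FreeGroup.mk l ∈ V := by
    simp only [V, List.mem_toFinset, List.mem_map, List.mem_tails]
    exact ⟨l, hl, rfl⟩
  have hone : 1 ∈ V := hsuffix [] List.nil_suffix
  choose σ hσ using fun x : α => exists_perm_extending_mul_left V (FreeGroup.of x)
  refine ⟨Equiv.Perm V, inferInstance, inferInstance, FreeGroup.lift σ, fun h => hw ?_⟩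
  have horbit := freeGroup_lift_mk_apply_one hσ hone w.toWord hsuffix
  rw [FreeGroup.mk_toWord, h] at horbit
  exact horbit.symm

theorem exists_finiteIndexNormalSubgroup_forall_notMem {Γ : Type*} [Group Γ]
    [Group.ResiduallyFinite Γ] (W : Finset Γ) :
    ∃ N : FiniteIndexNormalSubgroup Γ, ∀ w ∈ W, w ≠ 1 → w ∉ N := by
  classical
  have : Nonempty (FiniteIndexNormalSubgroup Γ) := ⟨.ofSubgroup ⊤⟩
  choose! N hN using Group.exists_finiteIndexNormalSubgroup_notMem (G := Γ)
  obtain ⟨M, hM⟩ := (W.image N).exists_le (α := (FiniteIndexNormalSubgroup Γ)ᵒᵈ)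
  exact ⟨M, fun w hw hne hmem => hN w hne (hM _ (Finset.mem_image_of_mem N hw) hmem)⟩

end FreeGroup

section Semidirect

variable {P : Type*} [Group P]

/-- The action of a group `P` on the free group with basis `P` that permutes the basis by left
translation. The semidirect product `FreeGroup P ⋊[freeGroupTranslation P] P` is the free product
of `P` with the infinite cyclic group generated by the basis element at `1`. -/
def freeGroupTranslation (P : Type*) [Group P] : P →* MulAut (FreeGroup P) where
  toFun p := FreeGroup.freeGroupCongr (Equiv.mulLeft p)
  map_one' := by ext; simp
  map_mul' p q := by
    apply MulEquiv.toMonoidHom_injective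
    ext
    simp [mul_assoc]

theorem freeGroupTranslation_apply (p : P) (w : FreeGroup P) :
    freeGroupTranslation P p w = FreeGroup.map (fun x => p * x) w := rfl

/-- The candidate quasi-action of `FreeGroup P ⋊[freeGroupTranslation P] P` on `A × K` built from a
candidate quasi-action `φ` of `P` on `A` and a homomorphism `π : FreeGroup A →* K`. The element
`(w, p)` acts by `φ p` on the first coordinate; it multiplies the second one by the image under `π`
of `w`, read at the point `a` through the orbit map `x ↦ φ x a`. -/
def skewProduct {A K : Type*} [Group K] (φ : P → A → A) (π : FreeGroup A →* K)
    (γ : FreeGroup P ⋊[freeGroupTranslation P] P) (x : A × K) : A × K :=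
  (φ γ.right x.1, x.2 * π (FreeGroup.map (fun y => φ y x.1) γ.left))

open scoped Pointwise in
theorem IsFreeAt.skewProduct [DecidableEq P] {A K : Type*} [Group K] {S : Finset P} (hone : 1 ∈ S)
    {F : Finset (FreeGroup P ⋊[freeGroupTranslation P] P)} (hright : ∀ γ ∈ F, γ.right ∈ S)
    (hleft : ∀ γ ∈ F, γ.left ∈ Subgroup.closure (FreeGroup.of '' (S : Set P)))
    {φ : P → A → A} {x : A × K} (h : IsFreeAt (S / S) φ x.1) {π : FreeGroup A →* K}
    (hπ : ∀ γ ∈ F, FreeGroup.map (fun y => φ y x.1) γ.left ≠ 1 →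
      π (FreeGroup.map (fun y => φ y x.1) γ.left) ≠ 1) :
    IsFreeAt F (skewProduct φ π) x where
  map_mul e he f hf := by
    have hmem {y : P} (hy : y ∈ S) : y ∈ S / S := by simpa using Finset.div_mem_div hy hone
    have hshift : FreeGroup.map (fun y => φ y x.1) (freeGroupTranslation P e.right f.left) =
        FreeGroup.map (fun y => φ y (φ e.right x.1)) f.left := by
      rw [freeGroupTranslation_apply, FreeGroup.map.comp]
      exact eqOn_freeGroup_map_closure
        (fun y hy => h.map_mul _ (hmem (hright e he)) y (hmem hy)) (hleft f hf)
    refine Prod.ext (h.map_mul _ (hmem (hright e he)) _ (hmem (hright f hf))) ?_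
    simp only [_root_.skewProduct, SemidirectProduct.mul_left, _root_.map_mul, hshift, mul_assoc]
  map_one := Prod.ext h.map_one (by simp [_root_.skewProduct])
  map_ne e he hne hfix := by
    have hmem : e.right ∈ S / S := by simpa using Finset.div_mem_div (hright e he) hone
    have he_right : e.right = 1 := of_not_not fun hr =>
      h.map_ne _ hmem hr (congrArg Prod.fst hfix)
    have hker : π (FreeGroup.map (fun y => φ y x.1) e.left) = 1 :=
      mul_eq_left.1 (congrArg Prod.snd hfix)
    have he_left : e.left = 1 := by
      refine injOn_freeGroup_map_closure (h.injOn hone) (hleft e he) (one_mem _) ?_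
      rw [_root_.map_one]
      exact of_not_not fun hl => hπ e he hl hker
    exact hne (SemidirectProduct.ext he_left he_right)

open scoped Pointwise in
theorem IsSofic.freeGroup_semidirectProduct (hP : IsSofic P) :
    IsSofic (FreeGroup P ⋊[freeGroupTranslation P] P) := by
  classical
  rw [isSofic_iff_exists_density_lt] at hP ⊢
  intro F ε hε
  choose T hT using exists_finset_mem_closure_freeGroup_of (α := P)
  let S : Finset P := insert 1 (F.image (·.right) ∪ F.biUnion fun γ => T γ.left)
  have hright (γ) (hγ : γ ∈ F) : γ.right ∈ S :=
    Finset.mem_insert_of_mem <| Finset.mem_union_left _ <| Finset.mem_image_of_mem _ hγ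
  have hleft (γ) (hγ : γ ∈ F) : γ.left ∈ Subgroup.closure (FreeGroup.of '' (S : Set P)) := by
    refine Subgroup.closure_mono (Set.image_mono fun y hy => ?_) (hT γ.left)
    exact Finset.mem_insert_of_mem <| Finset.mem_union_right _ <| Finset.mem_biUnion.2 ⟨γ, hγ, hy⟩
  obtain ⟨A, _, _, φ, hφ⟩ := hP (S / S) ε hε
  obtain ⟨N, hN⟩ := exists_finiteIndexNormalSubgroup_forall_notMem <|
    (Finset.univ ×ˢ F).image fun q => FreeGroup.map (fun y => φ y q.1) q.2.left
  let K := FreeGroup A ⧸ N.toSubgroup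
  let π : FreeGroup A →* K := QuotientGroup.mk' N.toSubgroup
  have hfree (x : A × K) (h : IsFreeAt (S / S) φ x.1) : IsFreeAt F (skewProduct φ π) x := by
    refine h.skewProduct (Finset.mem_insert_self 1 _) hright hleft fun γ hγ hne hker => ?_
    exact hN _ (Finset.mem_image_of_mem _ (Finset.mk_mem_product (Finset.mem_univ x.1) hγ)) hne
      ((QuotientGroup.eq_one_iff _).1 hker)
  have : Fintype K := Fintype.ofFinite K
  refine ⟨A × K, inferInstance, inferInstance, skewProduct φ π, ?_⟩
  calc density (fun x => ¬ IsFreeAt F (skewProduct φ π) x)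
      ≤ density (fun x : A × K => ¬ IsFreeAt (S / S) φ x.1) := density_mono fun x => mt (hfree x)
    _ ≤ density (fun a => ¬ IsFreeAt (S / S) φ a) :=
        density_comp_fst_le fun a => ¬ IsFreeAt (S / S) φ a
    _ < ε := hφ

/-- The homomorphism out of `FreeGroup P ⋊[freeGroupTranslation P] P` that extends `ρ` and takes
the basis element at `1` to `t`, by the universal property of the free product with `ℤ`. -/
def semidirectLift {Γ : Type*} [Group Γ] (ρ : P →* Γ) (t : Γ) :
    FreeGroup P ⋊[freeGroupTranslation P] P →* Γ :=
  SemidirectProduct.lift (FreeGroup.lift fun p => ρ p * t * (ρ p)⁻¹) ρ fun p => by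
    ext q
    simp [freeGroupTranslation_apply, mul_assoc]

theorem semidirectLift_inr {Γ : Type*} [Group Γ] (ρ : P →* Γ) (t : Γ) (p : P) :
    semidirectLift ρ t (SemidirectProduct.inr p) = ρ p :=
  SemidirectProduct.lift_inr ..

theorem semidirectLift_inl_of_one {Γ : Type*} [Group Γ] (ρ : P →* Γ) (t : Γ) :
    semidirectLift ρ t (SemidirectProduct.inl (FreeGroup.of 1)) = t := by
  simp [semidirectLift]

end Semidirect

section Embedding

open Monoid (Coprod)
open Monoid.Coprod (inl inr snd)

variable (G H : Type*) [Group G] [Group H]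

/-- The homomorphism from `G ∗ H` to the free product of `G × H` with an infinite cyclic group `⟨t⟩`
that takes `g` to `(g, 1)` and `h` to `t⁻¹ (1, h) t`. -/
def coprodToSemidirect :
    Coprod G H →* FreeGroup (G × H) ⋊[freeGroupTranslation (G × H)] (G × H) :=
  Coprod.lift (SemidirectProduct.inr.comp (MonoidHom.inl G H))
    ((MulAut.conj (SemidirectProduct.inl (FreeGroup.of 1))⁻¹).toMonoidHom.comp
      (SemidirectProduct.inr.comp (MonoidHom.inr G H)))

/-- The involution of `(G ∗ H) × H` that exchanges the image in `H` of the first coordinate with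
the second coordinate. It carries the translations by `H` on one factor to those on the other,
see `swapPerm_conj_toPerm`. -/
def swapPerm : Equiv.Perm (Coprod G H × H) :=
  Function.Involutive.toPerm (fun x => (inr (x.2 * (snd x.1)⁻¹) * x.1, snd x.1)) fun x => by
    ext <;> simp [mul_assoc]

theorem swapPerm_conj_toPerm (h : H) :
    (swapPerm G H)⁻¹ * MulAction.toPerm ((1, h) : Coprod G H × H) * swapPerm G H =
      MulAction.toPerm ((inr h, 1) : Coprod G H × H) := by
  rw [mul_assoc, inv_mul_eq_iff_eq_mul]
  ext x <;> simp [swapPerm, mul_assoc]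

theorem coprodToSemidirect_injective : Function.Injective (coprodToSemidirect G H) := by
  let τ := MulAction.toPermHom (Coprod G H × H) (Coprod G H × H)
  let ρ : G × H →* Equiv.Perm (Coprod G H × H) := τ.comp (MonoidHom.prodMap inl (MonoidHom.id H))
  have hτ : Function.Injective (τ.comp (MonoidHom.inl (Coprod G H) H)) :=
    MulAction.toPerm_injective.comp fun _ _ => congrArg Prod.fst
  have hcomp : (semidirectLift ρ (swapPerm G H)).comp (coprodToSemidirect G H) =
      τ.comp (MonoidHom.inl (Coprod G H) H) := by
    refine Coprod.hom_ext (MonoidHom.ext fun g => ?_) (MonoidHom.ext fun h => ?_)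
    · simp [coprodToSemidirect, semidirectLift_inr, ρ]
    · simpa [coprodToSemidirect, semidirectLift_inr, semidirectLift_inl_of_one, ρ, τ] using
        swapPerm_conj_toPerm G H h
  rw [← hcomp, MonoidHom.coe_comp] at hτ
  exact hτ.of_comp

end Embedding

/-- The free product (coproduct in the category of groups) of two sofic groups is sofic. -/
theorem isSofic_coprod {G H : Type*} [Group G] [Group H]
    (hG : IsSofic G) (hH : IsSofic H) : IsSofic (Monoid.Coprod G H) := by
  have hP : IsSofic (G × H) := hG.prod hH
  exact hP.freeGroup_semidirectProduct.of_injective (coprodToSemidirect_injective G H)
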